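/- For all n, m ≥ 0 and generic tuples ū=(u_1,…,u_n), v̄=(v_1,…,v_m), the multiple action of the modified diagonal operator ν_{22} on a modified Bethe vector is ν_{22}(ū) ν_{12}(v̄) |0⟩ = β_1^n Σ_{w̄ ⇒ {w̄_I, w̄_II}} (−β_1)^{−l} λ_2(w̄_I)·K^{(1)}_{n,l}(ū | w̄_I + c)·f(w̄_I, w̄_II)·ν_{12}(w̄_II) |0⟩, where w̄ = {ū, v̄}, the sum runs over all partitions of w̄ into two disjoint subtuples with no restriction on cardinalities, and l = #w̄_I. -/

import Mathlib

open scoped BigOperators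

noncomputable section

/-- The rational function `g(u,v) = c/(u-v)`. -/
def gC (c u v : ℂ) : ℂ := c / (u - v)

/-- The rational function `f(u,v) = (u-v+c)/(u-v)`. -/
def fC (c u v : ℂ) : ℂ := (u - v + c) / (u - v)

/-- The rational function `h(u,v) = (u-v+c)/c`. -/
def hC (c u v : ℂ) : ℂ := (u - v + c) / c

/-- A family of parameters is generic if all pairwise differences avoid `0, ±c, ±2c`. -/
def Generic (c : ℂ) {ι : Type*} (w : ι → ℂ) : Prop :=
  ∀ i j, i ≠ j → w i - w j ≠ 0 ∧ w i - w j ≠ c ∧ w i - w j ≠ -c ∧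
    w i - w j ≠ 2 * c ∧ w i - w j ≠ -2 * c

/-- The modified Izergin determinant `K^{(z)}(x̄|ȳ)`. -/
def KIz (c z : ℂ) {ι κ : Type*} [Fintype ι] [Fintype κ] [DecidableEq κ]
    (x : ι → ℂ) (y : κ → ℂ) : ℂ :=
  Matrix.det (Matrix.of fun j k : κ =>
    -z * (if j = k then 1 else 0) +
      (∏ i, fC c (x i) (y j)) * (∏ i ∈ Finset.univ.erase j, fC c (y j) (y i))
        / hC c (y j) (y k))

/-- The conjugated modified Izergin determinant: `c` is replaced by `-c`. -/
def KIzBar (c z : ℂ) {ι κ : Type*} [Fintype ι] [Fintype κ] [DecidableEq κ]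
    (x : ι → ℂ) (y : κ → ℂ) : ℂ :=
  KIz (-c) z x y

/-- Restriction of a tuple to a subtuple indexed by a `Finset`. -/
def restr {p : ℕ} (w : Fin p → ℂ) (s : Finset (Fin p)) : {x // x ∈ s} → ℂ :=
  fun i => w i.1

/-- Double product `f(w̄_s, w̄_t)` over two subtuples of a tuple. -/
def fSS (c : ℂ) {p : ℕ} (w : Fin p → ℂ) (s t : Finset (Fin p)) : ℂ :=
  ∏ i ∈ s, ∏ j ∈ t, fC c (w i) (w j)

/-- Ordered product of operators over a subtuple (the operators pairwise commute,
so the order is irrelevant). -/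
def opProd {V : Type*} [AddCommGroup V] [Module ℂ V] {p : ℕ}
    (op : ℂ → Module.End ℂ V) (w : Fin p → ℂ) (s : Finset (Fin p)) : Module.End ℂ V :=
  ((s.sort (· ≤ ·)).map (fun i => op (w i))).prod

/-- The index subsets of a partition of `Fin p` into three parts. -/
def parts {p : ℕ} (σ : Fin p → Fin 3) (k : Fin 3) : Finset (Fin p) :=
  Finset.univ.filter (fun i => σ i = k)


theorem fC_neg (c x y : ℂ) : fC (-c) x y = fC c y x := by
  unfold fC
  rw [← neg_div_neg_eq]; congr 1 <;> ring

theorem gC_neg (c x y : ℂ) : gC (-c) x y = gC c y x := by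
  unfold gC
  rw [← neg_div_neg_eq]; congr 1 <;> ring

theorem gC_swap (c x y : ℂ) : gC c x y = - gC c y x := by
  unfold gC
  rw [← neg_sub, div_neg]

/-- Partial fractions. -/
theorem pf {ι : Type*} [DecidableEq ι] (c : ℂ) (w : ι → ℂ) (T : Finset ι) :
    ∀ (z : ℂ), (∀ i ∈ T, ∀ j ∈ T, i ≠ j → w i ≠ w j) → (∀ i ∈ T, w i ≠ z) →
    ∏ j ∈ T, fC c (w j) z =
      1 + ∑ j ∈ T, gC c (w j) z * ∏ i ∈ T.erase j, fC c (w i) (w j) := by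
  induction T using Finset.induction_on with
  | empty => intro z _ _; simp
  | insert b T hb ih =>
    intro z hw hz
    have hw' : ∀ i ∈ T, ∀ j ∈ T, i ≠ j → w i ≠ w j := fun i hi j hj =>
      hw i (Finset.mem_insert_of_mem hi) j (Finset.mem_insert_of_mem hj)
    have hTb : ∀ i ∈ T, w i ≠ w b := fun i hi =>
      hw i (Finset.mem_insert_of_mem hi) b (Finset.mem_insert_self _ _) (by grind)
    have hbz := hz b (Finset.mem_insert_self _ _)
    have hTz : ∀ i ∈ T, w i ≠ z := fun i hi => hz i (Finset.mem_insert_of_mem hi)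
    rw [Finset.prod_insert hb, Finset.sum_insert hb, Finset.erase_insert hb,
      ih z hw' hTz, ih (w b) hw' hTb]
    have : ∑ j ∈ T, gC c (w j) z * ∏ i ∈ (insert b T).erase j, fC c (w i) (w j)
        = ∑ j ∈ T, gC c (w j) z * fC c (w b) (w j) * ∏ i ∈ T.erase j, fC c (w i) (w j) := by
      refine Finset.sum_congr rfl fun j hj => ?_
      have hbj : b ≠ j := by grind
      rw [Finset.erase_insert_of_ne hbj, Finset.prod_insert (by grind)]
      ring
    rw [this, mul_add, mul_add, Finset.mul_sum, Finset.mul_sum, add_assoc]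
    have h2 : ∑ i ∈ T, fC c (w b) z * (gC c (w i) z * ∏ i_1 ∈ T.erase i, fC c (w i_1) (w i))
       = ∑ i ∈ T, gC c (w b) z * (gC c (w i) (w b) * ∏ i_1 ∈ T.erase i, fC c (w i_1) (w i))
        + ∑ j ∈ T, gC c (w j) z * fC c (w b) (w j) * ∏ i ∈ T.erase j, fC c (w i) (w j) := by
      rw [← Finset.sum_add_distrib]
      refine Finset.sum_congr rfl fun j hj => ?_
      have e : fC c (w b) z * gC c (w j) z
         = gC c (w b) z * gC c (w j) (w b) + gC c (w j) z * fC c (w b) (w j) := by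
        have h1 := sub_ne_zero.2 (hTz j hj)
        have h2 := sub_ne_zero.2 hbz
        have h3 := sub_ne_zero.2 (hTb j hj)
        have h4 := sub_ne_zero.2 (hTb j hj).symm
        have e4 : w b - w j = -(w j - w b) := by ring
        unfold fC gC
        rw [e4]
        field_simp
        ring
      linear_combination e * ∏ i_1 ∈ T.erase j, fC c (w i_1) (w j)
    rw [h2]
    have e5 : fC c (w b) z = 1 + gC c (w b) z := by
      have h2 := sub_ne_zero.2 hbz
      unfold fC gC
      field_simp
    rw [e5]; ring

theorem pf' {ι : Type*} [DecidableEq ι] (c : ℂ) (w : ι → ℂ) (T : Finset ι) (z : ℂ)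
    (h1 : ∀ i ∈ T, ∀ j ∈ T, i ≠ j → w i ≠ w j) (h2 : ∀ i ∈ T, w i ≠ z) :
    ∏ j ∈ T, fC c z (w j) =
      1 + ∑ j ∈ T, gC c z (w j) * ∏ i ∈ T.erase j, fC c (w j) (w i) := by
  simpa only [fC_neg, gC_neg] using pf (-c) w T z h1 h2

theorem cauchy_det (c : ℂ) (hc : c ≠ 0) (κ : Type*) [Fintype κ] :
    ∀ [DecidableEq κ] (x : κ → ℂ), (∀ i j, x i - x j + c ≠ 0) →
    Matrix.det (Matrix.of fun j k : κ => c / (x j - x k + c)) =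
      ∏ j, ∏ k, if j = k then 1 else (x j - x k) / (x j - x k + c) := by
  refine Fintype.induction_empty_option (P := fun κ _ => ∀ [DecidableEq κ] (x : κ → ℂ),
    (∀ i j, x i - x j + c ≠ 0) →
    Matrix.det (Matrix.of fun j k : κ => c / (x j - x k + c)) =
      ∏ j, ∏ k, if j = k then 1 else (x j - x k) / (x j - x k + c)) ?_ ?_ ?_ κ
  · intro α β _ e ih _ x hx
    let _ : Fintype α := Fintype.ofEquiv β e.symm
    classical
    rw [← Matrix.det_submatrix_equiv_self e]
    have := ih (x ∘ e) (fun i j => hx _ _)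
    rw [← e.prod_comp]
    simp_rw [← e.prod_comp (fun k => if _ = k then (1:ℂ) else _)]
    simp only [Function.comp, e.apply_eq_iff_eq] at this ⊢
    rw [← this]
    rfl
  · intro _ x hx; simp
  · intro α _ ih _ x hx
    classical
    let e : α ⊕ Unit ≃ Option α := (Equiv.optionEquivSumPUnit α).symm
    rw [← Matrix.det_submatrix_equiv_self e]
    have hblock : ((Matrix.of fun j k : Option α => c / (x j - x k + c)).submatrix e e)
      = Matrix.fromBlocks (Matrix.of fun j k : α => c / (x (some j) - x (some k) + c))
          (Matrix.of fun (j : α) (_ : Unit) => c / (x (some j) - x none + c))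
          (Matrix.of fun (_ : Unit) (k : α) => c / (x none - x (some k) + c)) 1 := by
      ext i j
      rcases i with i | i <;> rcases j with j | j <;> simp [e, hc]
    rw [hblock, Matrix.det_fromBlocks_one₂₂]
    have hA : ((Matrix.of fun j k : α => c / (x (some j) - x (some k) + c)) -
          (Matrix.of fun (j : α) (_ : Unit) => c / (x (some j) - x none + c)) *
          (Matrix.of fun (_ : Unit) (k : α) => c / (x none - x (some k) + c)))
        = Matrix.of fun j k : α => ((x (some j) - x none) / (x (some j) - x none + c)) *
           (Matrix.of fun j k : α => ((x none - x (some k)) / (x none - x (some k) + c)) *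
            (Matrix.of fun j k : α => c / (x (some j) - x (some k) + c)) j k) j k := by
      ext j k
      have h1 := hx (some j) (some k)
      have h2 := hx (some j) none
      have h3 := hx none (some k)
      simp [Matrix.mul_apply]
      field_simp
      ring
    rw [hA, Matrix.det_mul_column, Matrix.det_mul_row, ih (fun i => x (some i)) (fun i j => hx _ _)]
    rw [Fintype.prod_option]
    simp only [Fintype.prod_option, Option.some_inj, reduceCtorEq, if_false, if_true, one_mul,
      Finset.prod_mul_distrib]
    ring

/-- The determinant as a sum over subsets. -/
theorem KIz_expand (c : ℂ) (hc : c ≠ 0) {ι κ : Type*} [Fintype ι] [Fintype κ] [DecidableEq κ]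
    (x : ι → ℂ) (y : κ → ℂ) (hy : ∀ i j, y i - y j + c ≠ 0) (hy' : ∀ i j, i ≠ j → y i ≠ y j) :
    KIz c 1 x y = ∑ t : Finset κ, (-1) ^ (tᶜ.card) * (∏ i ∈ t, ∏ a, fC c (x a) (y i)) *
      ∏ i ∈ t, ∏ j ∈ tᶜ, fC c (y i) (y j) := by
  set A : κ → ℂ := fun j => ∏ a, fC c (x a) (y j) with hA
  set F : κ → ℂ := fun j => ∏ i ∈ Finset.univ.erase j, fC c (y j) (y i) with hF
  have h0 : KIz c 1 x y = (Matrix.detRowAlternating (R := ℂ) (n := κ))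
      ((fun j k => A j * F j * (c / (y j - y k + c))) + (fun j k => -(if j = k then 1 else 0))) := by
    unfold KIz
    change Matrix.det _ = Matrix.det _
    congr 1
    ext j k
    simp only [Matrix.of_apply, Pi.add_apply, hC, hA, hF]
    have := hy j k
    field_simp
    ring
  rw [h0, AlternatingMap.map_add_univ]
  refine Finset.sum_congr rfl fun t _ => ?_
  have hM : (Matrix.detRowAlternating (R := ℂ) (n := κ)) (t.piecewise
        (fun j k => A j * F j * (c / (y j - y k + c)))
        (fun j k => -(if j = k then 1 else 0))) = Matrix.det (Matrix.of fun j k : κ => if j ∈ t then A j * F j * (c / (y j - y k + c))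
        else -(if j = k then 1 else 0)) := by
    change Matrix.det _ = Matrix.det _
    congr 1
    ext j k
    by_cases h : j ∈ t <;> simp [Finset.piecewise, h]
  rw [hM, Matrix.twoBlockTriangular_det _ (fun i => i ∈ t)]
  · have h1 : (Matrix.toSquareBlockProp (Matrix.of fun j k : κ => if j ∈ t then A j * F j * (c / (y j - y k + c))
        else -(if j = k then 1 else 0)) (fun i => ¬ i ∈ t)) = -1 := by
      ext i j
      have := i.2
      simp [Matrix.toSquareBlockProp_def, this, Matrix.one_apply, Subtype.ext_iff]
    have h2 : (Matrix.toSquareBlockProp (Matrix.of fun j k : κ => if j ∈ t then A j * F j * (c / (y j - y k + c))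
        else -(if j = k then 1 else 0)) (fun i => i ∈ t)) =
        Matrix.of fun i j : {i // i ∈ t} => (A i * F i) *
          (Matrix.of fun i j : {i // i ∈ t} => c / (y i - y j + c)) i j := by
      ext i j
      simp [Matrix.toSquareBlockProp_def]
    rw [h1, h2, Subsingleton.elim (Subtype.fintype fun i => i ∈ t) (Finset.Subtype.fintype t),
      Matrix.det_mul_column, cauchy_det c hc _ (fun i : {i // i ∈ t} => y i)
      (fun i j => hy _ _), Matrix.det_neg, Matrix.det_one, mul_one]
    have h3 : Fintype.card {a // ¬ a ∈ t} = tᶜ.card := by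
      rw [Fintype.card_subtype]; congr 1; ext; simp
    rw [h3, ← Finset.prod_mul_distrib]
    have h4 : ∀ i : {i // i ∈ t}, (A i * F i) * (∏ k : {i // i ∈ t},
        if i = k then 1 else (y i - y k) / (y i - y k + c)) =
        A i * ∏ j ∈ tᶜ, fC c (y i) (y j) := by
      intro i
      have e1 : (∏ k : {i // i ∈ t}, if i = k then 1 else (y i - y k) / (y i - y k + c))
         = ∏ k ∈ t.erase i, (y i - y k) / (y i - y k + c) := by
        have e0 := Finset.prod_coe_sort t
          (fun k => if (i : κ) = k then (1 : ℂ) else (y i - y k) / (y i - y k + c))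
        simp only [Subtype.ext_iff]
        rw [e0, ← Finset.mul_prod_erase t _ i.2, if_pos rfl, one_mul]
        exact Finset.prod_congr rfl fun k hk => if_neg (by grind)
      have e2 : F i = (∏ k ∈ t.erase i, fC c (y i) (y k)) * ∏ j ∈ tᶜ, fC c (y i) (y j) := by
        rw [← Finset.prod_union (by rw [Finset.disjoint_left]; simp)]
        refine Finset.prod_congr ?_ fun _ _ => rfl
        ext k; have := i.2; simp only [Finset.mem_erase, Finset.mem_univ, Finset.mem_union, Finset.mem_compl]
        grind
      have e3 : (∏ k ∈ t.erase (i : κ), fC c (y i) (y k)) *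
          ∏ k ∈ t.erase (i : κ), (y i - y k) / (y i - y k + c) = 1 := by
        rw [← Finset.prod_mul_distrib]
        refine Finset.prod_eq_one fun k hk => ?_
        have := sub_ne_zero.2 (hy' i k (by grind))
        have := hy i k
        unfold fC
        field_simp
      rw [e1, e2]
      linear_combination (A i * ∏ j ∈ tᶜ, fC c (y i) (y j)) * e3
    rw [Finset.prod_congr rfl fun i _ => h4 i, Finset.prod_coe_sort t
      (fun i => A i * ∏ j ∈ tᶜ, fC c (y i) (y j)), Finset.prod_mul_distrib]
    ring
  · intro i hi j hj
    have : i ≠ j := by grind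
    simp [hi, this]

theorem KIz_empty (c : ℂ) (hc : c ≠ 0) {ι κ : Type*} [Fintype ι] [IsEmpty ι]
    [Fintype κ] [DecidableEq κ] [Nonempty κ]
    (x : ι → ℂ) (y : κ → ℂ) (hy : ∀ i j, y i - y j + c ≠ 0) (hy' : ∀ i j, i ≠ j → y i ≠ y j) :
    KIz c 1 x y = 0 := by
  unfold KIz
  refine Matrix.exists_vecMul_eq_zero_iff.1 ⟨fun _ => 1, ?_, ?_⟩
  · intro h
    exact one_ne_zero (congrFun h (Classical.arbitrary κ))
  · ext k
    simp only [Matrix.vecMul, dotProduct, Matrix.of_apply, Finset.univ_eq_empty, Finset.prod_empty,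
      one_mul, Pi.zero_apply, Finset.sum_add_distrib, neg_mul, Finset.sum_neg_distrib]
    rw [Finset.sum_ite_eq' Finset.univ k, if_pos (Finset.mem_univ _),
      ← Finset.add_sum_erase _ _ (Finset.mem_univ k)]
    rw [pf' c y (Finset.univ.erase k) (y k) (fun i _ j _ => hy' i j) (fun i hi => hy' i k (by grind))]
    have e1 : hC c (y k) (y k) = 1 := by simp [hC, hc]
    have e2 : ∑ j ∈ Finset.univ.erase k, (∏ i ∈ Finset.univ.erase j, fC c (y j) (y i)) / hC c (y j) (y k)
       = - ∑ j ∈ Finset.univ.erase k, gC c (y k) (y j) *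
         ∏ i ∈ (Finset.univ.erase k).erase j, fC c (y j) (y i) := by
      rw [← Finset.sum_neg_distrib]
      refine Finset.sum_congr rfl fun j hj => ?_
      have hjk : j ≠ k := by grind
      have hk : k ∈ Finset.univ.erase j := by simp [hjk.symm]
      rw [← Finset.mul_prod_erase _ _ hk, Finset.erase_right_comm, gC_swap]
      have h1 := hy j k
      have h2 := sub_ne_zero.2 (hy' j k hjk)
      unfold fC hC gC
      field_simp
    rw [e1, e2]
    ring

/-- Subset-sum form of the determinant. -/
def Qs (c : ℂ) {p : ℕ} (w : Fin p → ℂ) (U J : Finset (Fin p)) : ℂ :=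
  ∑ t ∈ J.powerset, (-1) ^ ((J \ t).card) * (∏ i ∈ t, ∏ a ∈ U, fC c (w a) (w i + c)) *
    fSS c w t (J \ t)

theorem fC_shift (c x y z : ℂ) : fC c (x + z) (y + z) = fC c x y := by
  simp [fC]

theorem KIz_eq_Qs (c : ℂ) (hc : c ≠ 0) {p : ℕ} (w : Fin p → ℂ) (hw : Generic c w)
    {ι : Type*} [Fintype ι] (x : ι → ℂ) (U J : Finset (Fin p))
    (hx : ∀ y, ∏ a, fC c (x a) y = ∏ a ∈ U, fC c (w a) y) :
    KIz c 1 x (fun i => restr w J i + c) = Qs c w U J := by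
  have hy : ∀ i j : {i // i ∈ J}, (restr w J i + c) - (restr w J j + c) + c ≠ 0 := by
    intro i j
    by_cases h : i = j
    · subst h; simpa using hc
    · have := (hw i j (by grind)).2.2.1
      unfold restr
      intro h2
      apply this
      linear_combination h2
  have hy' : ∀ i j : {i // i ∈ J}, i ≠ j → restr w J i + c ≠ restr w J j + c := by
    intro i j h
    have := (hw i j (by grind)).1
    unfold restr
    intro h2
    apply this
    linear_combination h2
  rw [KIz_expand c hc _ _ hy hy']
  unfold Qs
  refine Finset.sum_bij' (fun t _ => t.map (Function.Embedding.subtype _))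
    (fun t _ => t.subtype _) ?_ ?_ ?_ ?_ ?_
  · intro t _; 
    rw [Finset.mem_powerset]
    intro i hi
    simp only [Finset.mem_map, Function.Embedding.subtype_apply] at hi
    obtain ⟨a, _, rfl⟩ := hi
    exact a.2
  · intro t _; simp
  · intro t _; ext; simp
  · intro t ht
    have := Finset.mem_powerset.1 ht
    ext i; simp; grind
  · intro t _
    have hJ : J \ t.map (Function.Embedding.subtype _) = tᶜ.map (Function.Embedding.subtype _) := by
      ext i; simp
      grind
    rw [hJ]
    simp only [fSS, Finset.prod_map, Finset.card_map, Function.Embedding.subtype_apply, fC_shift, hx]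
    rfl

theorem Qs_empty (c : ℂ) (hc : c ≠ 0) {p : ℕ} (w : Fin p → ℂ) (hw : Generic c w)
    (J : Finset (Fin p)) : Qs c w ∅ J = if J = ∅ then 1 else 0 := by
  split_ifs with h
  · subst h; simp [Qs, fSS]
  · rw [← KIz_eq_Qs c hc w hw (fun i : Fin 0 => 0) ∅ J (by simp)]
    have : Nonempty {i // i ∈ J} := (Finset.nonempty_iff_ne_empty.2 h).to_subtype
    refine KIz_empty c hc _ _ ?_ ?_
    · intro i j
      by_cases h : i = j
      · subst h; simpa using hc
      · have := (hw i j (by grind)).2.2.1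
        unfold restr
        intro h2
        apply this
        linear_combination h2
    · intro i j h
      have := (hw i j (by grind)).1
      unfold restr
      intro h2
      apply this
      linear_combination h2

section fSSlemmas
variable {p : ℕ} (c : ℂ) (w : Fin p → ℂ)

theorem fSS_insert_left {a : Fin p} {s t : Finset (Fin p)} (h : a ∉ s) :
    fSS c w (insert a s) t = (∏ j ∈ t, fC c (w a) (w j)) * fSS c w s t := by
  simp [fSS, Finset.prod_insert h]

theorem fSS_insert_right {a : Fin p} {s t : Finset (Fin p)} (h : a ∉ t) :
    fSS c w s (insert a t) = (∏ j ∈ s, fC c (w j) (w a)) * fSS c w s t := by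
  simp [fSS, Finset.prod_insert h, Finset.prod_mul_distrib]

end fSSlemmas

theorem Qs_insert_both (c : ℂ) {p : ℕ} (w : Fin p → ℂ) (hw : Generic c w)
    (U J : Finset (Fin p)) (a : Fin p) (haU : a ∉ U) (haJ : a ∉ J) :
    Qs c w (insert a U) (insert a J) = - Qs c w U J := by
  unfold Qs
  rw [Finset.sum_powerset_insert haJ]
  have h2 : ∑ t ∈ J.powerset, (-1) ^ (((insert a J) \ (insert a t)).card) *
      (∏ i ∈ insert a t, ∏ b ∈ insert a U, fC c (w b) (w i + c)) *
      fSS c w (insert a t) ((insert a J) \ (insert a t)) = 0 := by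
    refine Finset.sum_eq_zero fun t ht => ?_
    have : ∏ i ∈ insert a t, ∏ b ∈ insert a U, fC c (w b) (w i + c) = 0 := by
      refine Finset.prod_eq_zero (Finset.mem_insert_self a t) ?_
      refine Finset.prod_eq_zero (Finset.mem_insert_self a U) ?_
      simp [fC]
    rw [this]; ring
  rw [h2, add_zero, ← Finset.sum_neg_distrib]
  refine Finset.sum_congr rfl fun t ht => ?_
  have htJ := Finset.mem_powerset.1 ht
  have hat : a ∉ t := fun h => haJ (htJ h)
  have haJt : a ∉ J \ t := by grind
  rw [Finset.insert_sdiff_of_notMem _ hat, Finset.card_insert_of_notMem haJt,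
    fSS_insert_right _ _ haJt]
  simp only [Finset.prod_insert haU, Finset.prod_mul_distrib]
  have h3 : (∏ i ∈ t, fC c (w a) (w i + c)) * (∏ j ∈ t, fC c (w j) (w a)) = 1 := by
    rw [← Finset.prod_mul_distrib]
    refine Finset.prod_eq_one fun i hi => ?_
    have hg := hw a i (by grind)
    have h1 := hg.1
    have h2 : w a - (w i + c) ≠ 0 := by
      intro h; apply hg.2.1; linear_combination h
    have h3 : w i - w a ≠ 0 := by
      intro h; apply h1; linear_combination -h
    unfold fC
    field_simp
    ring
  rw [pow_succ]
  linear_combination (-(-1) ^ (J \ t).card * (∏ i ∈ t, ∏ b ∈ U, fC c (w b) (w i + c)) *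
    fSS c w t (J \ t)) * h3

theorem Qs_insert (c : ℂ) {p : ℕ} (w : Fin p → ℂ) (hw : Generic c w)
    (U J : Finset (Fin p)) (a : Fin p) (haU : a ∉ U) (haJ : a ∉ J) :
    Qs c w (insert a U) J * (∏ j ∈ J, fC c (w j) (w a)) = Qs c w U J +
      ∑ x ∈ J, gC c (w a) (w x) * (∏ i ∈ J.erase x, fC c (w i) (w x)) * Qs c w U (J.erase x) := by
  unfold Qs
  simp_rw [Finset.mul_sum]
  rw [Finset.sum_comm' (t' := J.powerset) (s' := fun t => J \ t)
    (by intro x t; simp only [Finset.mem_powerset, Finset.mem_sdiff]; grind)]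
  rw [Finset.sum_mul, ← Finset.sum_add_distrib]
  refine Finset.sum_congr rfl fun t ht => ?_
  have htJ := Finset.mem_powerset.1 ht
  have hat : a ∉ t := fun h => haJ (htJ h)
  simp only [Finset.prod_insert haU, Finset.prod_mul_distrib]
  have h3 : (∏ i ∈ t, fC c (w a) (w i + c)) * (∏ j ∈ t, fC c (w j) (w a)) = 1 := by
    rw [← Finset.prod_mul_distrib]
    refine Finset.prod_eq_one fun i hi => ?_
    have hg := hw a i (by grind)
    have h1 := hg.1
    have h2 : w a - (w i + c) ≠ 0 := by
      intro h; apply hg.2.1; linear_combination h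
    have h3 : w i - w a ≠ 0 := by
      intro h; apply h1; linear_combination -h
    unfold fC
    field_simp
    ring
  have h4 := pf c w (J \ t) (w a) (fun i _ j _ hij => sub_ne_zero.1 (hw i j hij).1)
    (fun i hi => sub_ne_zero.1 (hw i a (by grind)).1)
  have h5 : (∏ j ∈ J, fC c (w j) (w a)) =
      (∏ j ∈ J \ t, fC c (w j) (w a)) * ∏ j ∈ t, fC c (w j) (w a) :=
    (Finset.prod_sdiff htJ).symm
  have h6 : ∑ x ∈ J \ t, gC c (w a) (w x) * (∏ i ∈ J.erase x, fC c (w i) (w x)) *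
      ((-1) ^ ((J.erase x \ t).card) * (∏ i ∈ t, ∏ b ∈ U, fC c (w b) (w i + c)) *
        fSS c w t (J.erase x \ t)) =
      ((-1) ^ ((J \ t).card) * (∏ i ∈ t, ∏ b ∈ U, fC c (w b) (w i + c)) * fSS c w t (J \ t)) *
      ∑ j ∈ J \ t, gC c (w j) (w a) * ∏ i ∈ (J \ t).erase j, fC c (w i) (w j) := by
    rw [Finset.mul_sum]
    refine Finset.sum_congr rfl fun x hx => ?_
    have hxJ : x ∈ J := by grind
    have hxt : x ∉ t := by grind
    have e1 : J.erase x \ t = (J \ t).erase x := by ext; grind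
    have e2 : J \ t = insert x ((J \ t).erase x) := (Finset.insert_erase hx).symm
    have e3 : (J \ t).card = ((J \ t).erase x).card + 1 := (Finset.card_erase_add_one hx).symm
    have e4 : fSS c w t (J \ t) = (∏ j ∈ t, fC c (w j) (w x)) * fSS c w t ((J \ t).erase x) := by
      conv_lhs => rw [e2]
      exact fSS_insert_right _ _ (Finset.notMem_erase _ _)
    have e5 : (∏ i ∈ J.erase x, fC c (w i) (w x)) =
        (∏ i ∈ (J \ t).erase x, fC c (w i) (w x)) * ∏ i ∈ t, fC c (w i) (w x) := by
      rw [← e1]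
      exact (Finset.prod_sdiff (by grind)).symm
    rw [e1, e3, e4, e5, gC_swap c (w a) (w x), pow_succ]
    ring
  rw [h6, h5, h4]
  linear_combination ((-1) ^ (J \ t).card * (∏ i ∈ t, ∏ b ∈ U, fC c (w b) (w i + c)) *
    fSS c w t (J \ t)) * (1 + ∑ j ∈ J \ t, gC c (w j) (w a) *
      ∏ i ∈ (J \ t).erase j, fC c (w i) (w j)) * h3

theorem sum_reorg {p : ℕ} {M : Type*} [AddCommMonoid M] (W : Finset (Fin p))
    (G : Finset (Fin p) → Fin p → M) :
    ∑ s ∈ W.powerset, ∑ x ∈ W \ s, G s x = ∑ J ∈ W.powerset, ∑ x ∈ J, G (J.erase x) x := by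
  rw [Finset.sum_sigma', Finset.sum_sigma']
  refine Finset.sum_bij' (fun q _ => ⟨insert q.2 q.1, q.2⟩) (fun q _ => ⟨q.1.erase q.2, q.2⟩)
    ?_ ?_ ?_ ?_ ?_
  · rintro ⟨s, x⟩ h
    simp only [Finset.mem_sigma, Finset.mem_powerset, Finset.mem_sdiff] at h ⊢
    grind
  · rintro ⟨s, x⟩ h
    simp only [Finset.mem_sigma, Finset.mem_powerset, Finset.mem_sdiff] at h ⊢
    grind
  · rintro ⟨s, x⟩ h
    simp only [Finset.mem_sigma, Finset.mem_powerset, Finset.mem_sdiff] at h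
    simp [Finset.erase_insert h.2.2]
  · rintro ⟨s, x⟩ h
    simp only [Finset.mem_sigma] at h
    simp [Finset.insert_erase h.2]
  · rintro ⟨s, x⟩ h
    simp only [Finset.mem_sigma, Finset.mem_powerset, Finset.mem_sdiff] at h
    simp [Finset.erase_insert h.2.2]

section ops
variable {V : Type*} [AddCommGroup V] [Module ℂ V] {p : ℕ} (op : ℂ → Module.End ℂ V)
  (w : Fin p → ℂ)

theorem opProd_eq_noncomm {q : ℕ} (u : Fin q → ℂ) (e : Fin q ↪ Fin p) (he : ∀ i, w (e i) = u i)
    (hcomm : ∀ x y, op x * op y = op y * op x) (s : Finset (Fin q)) :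
    opProd op u s = Finset.noncommProd (s.map e) (fun i => op (w i)) (fun _ _ _ _ _ => hcomm _ _) := by
  unfold opProd Finset.noncommProd
  have : Multiset.map (fun i => op (w i)) (s.map e).val =
      (((s.sort (· ≤ ·)).map (fun i => op (u i)) : List _) : Multiset (Module.End ℂ V)) := by
    rw [Finset.map_val, Multiset.map_map, ← Multiset.map_coe, Finset.sort_eq]
    simp [he]
  simp only [this]
  rw [Multiset.noncommProd_coe]

theorem opProd_eq (hcomm : ∀ x y, op x * op y = op y * op x) (s : Finset (Fin p)) :
    opProd op w s = Finset.noncommProd s (fun i => op (w i)) (fun _ _ _ _ _ => hcomm _ _) := by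
  rw [opProd_eq_noncomm op w w (Function.Embedding.refl _) (fun _ => rfl) hcomm s]
  simp

theorem opProd_insert (hcomm : ∀ x y, op x * op y = op y * op x) (s : Finset (Fin p)) (a : Fin p) (ha : a ∉ s) :
    opProd op w (insert a s) = op (w a) * opProd op w s := by
  rw [opProd_eq op w hcomm, opProd_eq op w hcomm]
  exact Finset.noncommProd_insert_of_notMem _ _ _ _ ha

theorem opProd_empty : opProd op w ∅ = 1 := by
  simp [opProd]

theorem opProd_map {q : ℕ} (u : Fin q → ℂ) (e : Fin q ↪ Fin p) (he : ∀ i, w (e i) = u i)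
    (hcomm : ∀ x y, op x * op y = op y * op x) (s : Finset (Fin q)) :
    opProd op u s = opProd op w (s.map e) := by
  rw [opProd_eq op w hcomm, opProd_eq_noncomm op w u e he hcomm]

end ops

/-- Action of a single `N11` on a product of `N01`. -/
theorem single_op (c : ℂ) {V : Type*} [AddCommGroup V] [Module ℂ V] {p : ℕ} (w : Fin p → ℂ)
    (hw : Generic c w) (D B : ℂ → Module.End ℂ V)
    (hBB : ∀ x y, B x * B y = B y * B x)
    (hDB : ∀ x y, x ≠ y → D x * B y = fC c x y • (B y * D x) + gC c y x • (B x * D y))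
    (S : Finset (Fin p)) : ∀ a, a ∉ S →
    D (w a) * opProd B w S = (∏ j ∈ S, fC c (w a) (w j)) • (opProd B w S * D (w a)) +
      ∑ x ∈ S, (gC c (w x) (w a) * ∏ j ∈ S.erase x, fC c (w x) (w j)) •
        (opProd B w (insert a (S.erase x)) * D (w x)) := by
  induction S using Finset.induction_on with
  | empty => intro a _; simp [opProd_empty]
  | insert b S hb ih =>
    intro a ha
    have hab : a ≠ b := by grind
    have haS : a ∉ S := by grind
    have hwab : w a ≠ w b := sub_ne_zero.1 (hw a b hab).1
    rw [opProd_insert B w hBB S b hb, ← mul_assoc, hDB _ _ hwab, add_mul, smul_mul_assoc,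
      smul_mul_assoc, mul_assoc, mul_assoc, ih a haS, ih b hb, Finset.prod_insert hb,
      Finset.sum_insert hb, Finset.erase_insert hb, opProd_insert B w hBB S a haS]
    simp only [mul_add, smul_add, Finset.mul_sum, Finset.smul_sum, mul_smul_comm, smul_smul, mul_assoc]
    have key : ∀ x ∈ S, (gC c (w x) (w a) * ∏ j ∈ (insert b S).erase x, fC c (w x) (w j)) •
        (opProd B w (insert a ((insert b S).erase x)) * D (w x)) =
        (fC c (w a) (w b) * (gC c (w x) (w a) * ∏ j ∈ S.erase x, fC c (w x) (w j))) •
          (B (w b) * (opProd B w (insert a (S.erase x)) * D (w x))) +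
        (gC c (w b) (w a) * (gC c (w x) (w b) * ∏ j ∈ S.erase x, fC c (w x) (w j))) •
          (B (w a) * (opProd B w (insert b (S.erase x)) * D (w x))) := by
      intro x hx
      have hbx : b ≠ x := by grind
      have hax : a ≠ x := by grind
      have e1 : B (w b) * (opProd B w (insert a (S.erase x)) * D (w x)) =
        opProd B w (insert a ((insert b S).erase x)) * D (w x) := by
        rw [← mul_assoc, ← opProd_insert B w hBB _ b (by grind)]
        congr 2; ext; grind
      have e2 : B (w a) * (opProd B w (insert b (S.erase x)) * D (w x)) =
        opProd B w (insert a ((insert b S).erase x)) * D (w x) := by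
        rw [← mul_assoc, ← opProd_insert B w hBB _ a (by grind)]
        congr 2; ext; grind
      rw [e1, e2, ← add_smul, Finset.erase_insert_of_ne hbx, Finset.prod_insert (by grind)]
      congr 1
      have h1 : w x - w a ≠ 0 := (hw x a hax.symm).1
      have h2 : w a - w b ≠ 0 := (hw a b hab).1
      have h3 : w x - w b ≠ 0 := (hw x b hbx.symm).1
      have e : gC c (w x) (w a) * fC c (w x) (w b) =
        fC c (w a) (w b) * gC c (w x) (w a) + gC c (w b) (w a) * gC c (w x) (w b) := by
        rw [gC_swap c (w b) (w a)]
        unfold fC gC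
        field_simp
        ring
      linear_combination (∏ j ∈ S.erase x, fC c (w x) (w j)) * e
    rw [Finset.sum_congr rfl key, Finset.sum_add_distrib]
    abel

theorem single_vac (c : ℂ) {V : Type*} [AddCommGroup V] [Module ℂ V] {p : ℕ} (w : Fin p → ℂ)
    (hw : Generic c w) (D B : ℂ → Module.End ℂ V)
    (hBB : ∀ x y, B x * B y = B y * B x)
    (hDB : ∀ x y, x ≠ y → D x * B y = fC c x y • (B y * D x) + gC c y x • (B x * D y))
    (vac : V) (lam : ℂ → ℂ) (β : ℂ) (hvac : ∀ x, D x vac = lam x • vac + β • B x vac)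
    (S : Finset (Fin p)) (a : Fin p) (ha : a ∉ S) :
    D (w a) (opProd B w S vac) = β • opProd B w (insert a S) vac +
      ((∏ j ∈ S, fC c (w a) (w j)) * lam (w a)) • opProd B w S vac +
      ∑ x ∈ S, (gC c (w x) (w a) * (∏ j ∈ S.erase x, fC c (w x) (w j)) * lam (w x)) •
        opProd B w (insert a (S.erase x)) vac := by
  have h := congrArg (fun T : Module.End ℂ V => T vac) (single_op c w hw D B hBB hDB S a ha)
  simp only [LinearMap.add_apply, LinearMap.smul_apply, Module.End.mul_apply,
    LinearMap.sum_apply, hvac, map_add, map_smul] at h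
  rw [h]
  have hc1 : ∀ (T : Finset (Fin p)) (x : Fin p), x ∉ T →
      opProd B w T (B (w x) vac) = opProd B w (insert x T) vac := by
    intro T x hx
    rw [← Module.End.mul_apply, opProd_insert B w hBB _ _ hx]
    congr 1
    rw [opProd_eq B w hBB]
    exact (Finset.noncommProd_commute T _ _ (B (w x)) (fun y _ => hBB _ _)).symm
  rw [hc1 S a ha]
  have h2 : ∀ x ∈ S, opProd B w (insert a (S.erase x)) (B (w x) vac)
      = opProd B w (insert a S) vac := by
    intro x hx
    rw [hc1 _ _ (by grind)]
    congr 2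
    ext; grind
  have h3 := pf' c w S (w a) (fun i _ j _ hij => sub_ne_zero.1 (hw i j hij).1)
    (fun i hi => sub_ne_zero.1 (hw i a (by grind)).1)
  have h4 : ∑ x ∈ S, (gC c (w x) (w a) * ∏ j ∈ S.erase x, fC c (w x) (w j)) •
      (lam (w x) • opProd B w (insert a (S.erase x)) vac +
        β • opProd B w (insert a (S.erase x)) (B (w x) vac)) =
      (∑ x ∈ S, (gC c (w x) (w a) * (∏ j ∈ S.erase x, fC c (w x) (w j)) * lam (w x)) •
        opProd B w (insert a (S.erase x)) vac) +
      (β * ∑ x ∈ S, (gC c (w x) (w a) * ∏ j ∈ S.erase x, fC c (w x) (w j))) •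
        opProd B w (insert a S) vac := by
    rw [Finset.mul_sum, Finset.sum_smul, ← Finset.sum_add_distrib]
    refine Finset.sum_congr rfl fun x hx => ?_
    rw [h2 x hx]
    module
  rw [h4]
  have h5 : ∑ j ∈ S, gC c (w a) (w j) * ∏ i ∈ S.erase j, fC c (w j) (w i) =
     - ∑ x ∈ S, (gC c (w x) (w a) * ∏ j ∈ S.erase x, fC c (w x) (w j)) := by
    rw [← Finset.sum_neg_distrib]
    refine Finset.sum_congr rfl fun x hx => ?_
    rw [gC_swap]; ring
  rw [h5] at h3
  rw [h3]
  module

theorem main_action (c : ℂ) (hc : c ≠ 0) {V : Type*} [AddCommGroup V] [Module ℂ V] {p : ℕ}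
    (w : Fin p → ℂ) (hw : Generic c w) (D B : ℂ → Module.End ℂ V)
    (hBB : ∀ x y, B x * B y = B y * B x) (hDD : ∀ x y, D x * D y = D y * D x)
    (hDB : ∀ x y, x ≠ y → D x * B y = fC c x y • (B y * D x) + gC c y x • (B x * D y))
    (vac : V) (lam : ℂ → ℂ) (β : ℂ) (hβ : β ≠ 0)
    (hvac : ∀ x, D x vac = lam x • vac + β • B x vac)
    (Y U : Finset (Fin p)) : Disjoint U Y →
    (opProd D w U) (opProd B w Y vac) = β ^ U.card • ∑ s ∈ (U ∪ Y).powerset,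
      ((-β) ^ (-(s.card : ℤ)) * (∏ i ∈ s, lam (w i)) * Qs c w U s * fSS c w s ((U ∪ Y) \ s)) •
        opProd B w ((U ∪ Y) \ s) vac := by
  induction U using Finset.induction_on with
  | empty =>
    intro _
    simp only [opProd_empty, Finset.empty_union, Finset.card_empty, pow_zero, one_smul,
      Qs_empty c hc w hw]
    rw [Finset.sum_eq_single ∅]
    · simp [fSS]
    · intro s _ hs; simp [hs]
    · simp
  | insert a U haU ih =>
    intro hdis
    have haY : a ∉ Y := by
      rw [Finset.disjoint_insert_left] at hdis; exact hdis.1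
    have hUY : Disjoint U Y := by
      rw [Finset.disjoint_insert_left] at hdis; exact hdis.2
    rw [opProd_insert D w hDD U a haU, Module.End.mul_apply, ih hUY, map_smul, map_sum,
      Finset.card_insert_of_notMem haU, Finset.insert_union]
    set W := U ∪ Y with hW
    have haW : a ∉ W := by simp [hW, haU, haY]
    rw [Finset.sum_powerset_insert haW]
    have hb : -β ≠ 0 := neg_ne_zero.2 hβ
    have hz : ∀ k : ℕ, (-β) ^ (-((k + 1 : ℕ) : ℤ)) * (-β) = (-β) ^ (-(k : ℤ)) := by
      intro k
      rw [← zpow_add_one₀ hb]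
      congr 1
      push_cast; ring
    set C : Finset (Fin p) → ℂ := fun s =>
      (-β) ^ (-(s.card : ℤ)) * (∏ i ∈ s, lam (w i)) * Qs c w U s * fSS c w s (W \ s) with hC
    have hL : ∀ s ∈ W.powerset, D (w a) (C s • opProd B w (W \ s) vac) =
        (β * C s) • opProd B w (insert a (W \ s)) vac +
        (C s * ((∏ j ∈ W \ s, fC c (w a) (w j)) * lam (w a))) • opProd B w (W \ s) vac +
        ∑ x ∈ W \ s, (C s * (gC c (w x) (w a) * (∏ j ∈ (W \ s).erase x, fC c (w x) (w j))
          * lam (w x))) • opProd B w (insert a ((W \ s).erase x)) vac := by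
      intro s hs
      rw [map_smul, single_vac c w hw D B hBB hDB vac lam β hvac (W \ s) a (by grind)]
      rw [smul_add, smul_add, Finset.smul_sum]
      simp only [smul_smul, mul_comm (C s) β]
    rw [Finset.sum_congr rfl hL, Finset.sum_add_distrib, Finset.sum_add_distrib, sum_reorg,
      add_right_comm, ← Finset.sum_add_distrib, pow_succ, mul_smul]
    congr 1
    rw [smul_add]
    congr 1
    · rw [Finset.smul_sum]
      refine Finset.sum_congr rfl fun J hJ => ?_
      have hJW := Finset.mem_powerset.1 hJ
      have haJ : a ∉ J := fun h => haW (hJW h)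
      have e1 : (insert a W) \ J = insert a (W \ J) := Finset.insert_sdiff_of_notMem _ haJ
      have e2 : ∀ x ∈ J, (W \ J.erase x).erase x = W \ J := by
        intro x hx; ext; grind
      rw [e1, fSS_insert_right _ _ (by grind), smul_smul]
      have e3 : ∀ x ∈ J, (C (J.erase x) * (gC c (w x) (w a) *
          (∏ j ∈ (W \ J.erase x).erase x, fC c (w x) (w j)) * lam (w x))) •
          opProd B w (insert a ((W \ J.erase x).erase x)) vac =
          (β * ((-β) ^ (-(J.card : ℤ)) * (∏ i ∈ J, lam (w i)) * fSS c w J (W \ J) *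
          (gC c (w a) (w x) * (∏ i ∈ J.erase x, fC c (w i) (w x)) * Qs c w U (J.erase x)))) •
          opProd B w (insert a (W \ J)) vac := by
        intro x hx
        rw [e2 x hx]
        congr 1
        have e4 : J = insert x (J.erase x) := (Finset.insert_erase hx).symm
        have e5 : W \ J.erase x = insert x (W \ J) := by ext; grind
        have e6 : fSS c w J (W \ J) = (∏ j ∈ W \ J, fC c (w x) (w j)) *
            fSS c w (J.erase x) (W \ J) := by
          have := fSS_insert_left c w (t := W \ J) (Finset.notMem_erase x J)
          rwa [← e4] at this
        have e7 : ∏ i ∈ J, lam (w i) = lam (w x) * ∏ i ∈ J.erase x, lam (w i) :=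
          (Finset.mul_prod_erase J _ hx).symm
        have e8 := hz (J.erase x).card
        rw [Finset.card_erase_add_one hx] at e8
        simp only [hC]
        rw [e5, fSS_insert_right _ _ (by grind), e6, e7, ← e8, gC_swap c (w a) (w x)]
        ring
      rw [Finset.sum_congr rfl e3, ← Finset.sum_smul, ← add_smul]
      congr 1
      rw [← Finset.mul_sum, ← Finset.mul_sum]
      have hQ := Qs_insert c w hw U J a haU haJ
      simp only [hC]
      linear_combination (-(β * (-β) ^ (-(J.card : ℤ)) * (∏ i ∈ J, lam (w i)) *
        fSS c w J (W \ J))) * hQ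
    · rw [Finset.smul_sum]
      refine Finset.sum_congr rfl fun s hs => ?_
      have hsW := Finset.mem_powerset.1 hs
      have has : a ∉ s := fun h => haW (hsW h)
      have e1 : (insert a W) \ (insert a s) = W \ s := by ext; grind
      rw [e1, smul_smul, Qs_insert_both c w hw U s a haU has, fSS_insert_left _ _ has,
        Finset.prod_insert has, Finset.card_insert_of_notMem has]
      congr 1
      simp only [hC]
      rw [← hz s.card]
      ring

/-- Multiple action of the modified diagonal operator `ν₂₂` on a modified Bethe vector. -/
theorem stmt3
    (c : ℂ) (hc : c ≠ 0) (β1 β2 : ℂ) (hβ1 : β1 ≠ 0) (hβ2 : β2 ≠ 0)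
    (V : Type*) [AddCommGroup V] [Module ℂ V]
    (N : Fin 2 → Fin 2 → ℂ → Module.End ℂ V)
    (vac : V) (lam1 lam2 : ℂ → ℂ)
    (hYang : ∀ (i j k l : Fin 2) (x y : ℂ), x ≠ y →
      N i j x * N k l y - N k l y * N i j x
        = gC c x y • (N k j y * N i l x - N k j x * N i l y))
    (hCommSame : ∀ (i j : Fin 2) (x y : ℂ), N i j x * N i j y = N i j y * N i j x)
    (hvac11 : ∀ x : ℂ, N 0 0 x vac = lam1 x • vac + β2 • (N 0 1 x vac))
    (hvac22 : ∀ x : ℂ, N 1 1 x vac = lam2 x • vac + β1 • (N 0 1 x vac))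
    (hvac21 : ∀ x : ℂ, N 1 0 x vac
      = (β1 * lam1 x + β2 * lam2 x) • vac + (β1 * β2) • (N 0 1 x vac))
    (n m : ℕ) (u : Fin n → ℂ) (v : Fin m → ℂ)
    (hgen : Generic c (Fin.append u v)) :
    (opProd (N 1 1) u Finset.univ * opProd (N 0 1) v Finset.univ) vac
      = β1 ^ n • ∑ s : Finset (Fin (n + m)),
          ((-β1) ^ (-(s.card : ℤ)) *
              (∏ i ∈ s, lam2 (Fin.append u v i)) *
              KIz c 1 u (fun i => restr (Fin.append u v) s i + c) *
              fSS c (Fin.append u v) s sᶜ) •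
            (opProd (N 0 1) (Fin.append u v) sᶜ vac) := by
  set w := Fin.append u v with hwdef
  set U : Finset (Fin (n + m)) := Finset.univ.map (Fin.castAddEmb m) with hU
  set Y : Finset (Fin (n + m)) := Finset.univ.map (Fin.natAddEmb n) with hY
  have hUY : U ∪ Y = Finset.univ := by
    ext i
    simp only [hU, hY, Finset.mem_union, Finset.mem_map, Finset.mem_univ, true_and, iff_true]
    refine Fin.addCases (fun j => Or.inl ⟨j, rfl⟩) (fun j => Or.inr ⟨j, rfl⟩) i
  have hdis : Disjoint U Y := by
    rw [Finset.disjoint_left]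
    intro i hi hj
    simp only [hU, hY, Finset.mem_map, Finset.mem_univ, true_and] at hi hj
    obtain ⟨j, rfl⟩ := hi
    obtain ⟨k, hk⟩ := hj
    have := congrArg Fin.val hk
    simp at this
    omega
  have hDB : ∀ x y, x ≠ y → N 1 1 x * N 0 1 y =
      fC c x y • (N 0 1 y * N 1 1 x) + gC c y x • (N 0 1 x * N 1 1 y) := by
    intro x y hxy
    have h := hYang 1 1 0 1 x y hxy
    have e5 : fC c x y = 1 + gC c x y := by
      have h2 := sub_ne_zero.2 hxy
      unfold fC gC
      field_simp
    rw [sub_eq_iff_eq_add] at h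
    rw [h, e5, gC_swap c y x]
    module
  have hmain := main_action c hc w hgen (N 1 1) (N 0 1) (hCommSame 0 1) (hCommSame 1 1) hDB vac
    lam2 β1 hβ1 hvac22 Y U hdis
  rw [opProd_map (N 1 1) w u (Fin.castAddEmb m) (fun i => by simp [hwdef]) (hCommSame 1 1),
    opProd_map (N 0 1) w v (Fin.natAddEmb n) (fun i => by simp [hwdef]) (hCommSame 0 1),
    Module.End.mul_apply, hmain, hUY]
  have hcard : U.card = n := by simp [hU]
  rw [hcard, Finset.powerset_univ]
  congr 1
  refine Finset.sum_congr rfl fun s _ => ?_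
  rw [KIz_eq_Qs c hc w hgen u U s, Finset.compl_eq_univ_sdiff]
  intro y
  simp [hU, hwdef]
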